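/- Let λ > 0, N ∈ ℕ with N ≥ 1, and let z = (z[0], …, z[N]) ∈ ℝ^{N+1} be such that M_λ(z[0]) = z[0] and M_λ(z[N]) = z[N] (no folding occurs at the first and last sample). Set w[k] = M_λ(z[k]) for k = 0, …, N. Then for every n = 0, …, N−1, \hat{Δz}[n] = (e^{2πi n/N} − 1)·\tilde z[n] − e^{2πi n/N}·(w[0] − w[N]). -/

import Mathlib

open Complex Real

/-- The centered modulo operator `M_λ(t) = t − 2λ⌊(t+λ)/(2λ)⌋`. -/
noncomputable def centeredModulo (lam t : ℝ) : ℝ :=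
  t - 2 * lam * ⌊(t + lam) / (2 * lam)⌋

/-! Replacing `k` by `k + 1` in the terms `ω ^ k • z k`, `k < N`, trades the first term `z 0` for
`ω ^ N • z N`. When `ω ^ N = 1` the sum therefore changes only by `z N - z 0`, a quantity known from
the folded samples because neither end is folded. -/

section SummationByParts

variable {R M : Type*} [Ring R] [AddCommGroup M] [Module R M] {N : ℕ}

theorem sum_pow_succ_smul_succ (ω : R) (z : Fin (N + 1) → M) :
    ∑ k : Fin N, ω ^ (k + 1 : ℕ) • z k.succ =
      ∑ k : Fin N, ω ^ (k : ℕ) • z k.castSucc + ω ^ N • z (Fin.last N) - z 0 := by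
  have split_ends := (Fin.sum_univ_succ fun k : Fin (N + 1) ↦ ω ^ (k : ℕ) • z k).symm.trans
    (Fin.sum_univ_castSucc _)
  simp only [Fin.val_zero, pow_zero, one_smul, Fin.val_succ, Fin.val_castSucc,
    Fin.val_last] at split_ends
  exact eq_sub_of_add_eq' split_ends

theorem smul_sum_pow_smul_sub (ω : R) (z : Fin (N + 1) → M) :
    ω • ∑ k : Fin N, ω ^ (k : ℕ) • (z k.succ - z k.castSucc) =
      (1 - ω) • ∑ k : Fin N, ω ^ (k : ℕ) • z k.castSucc + ω ^ N • z (Fin.last N) - z 0 := by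
  calc ω • ∑ k : Fin N, ω ^ (k : ℕ) • (z k.succ - z k.castSucc)
      = ∑ k : Fin N, ω ^ (k + 1 : ℕ) • z k.succ - ω • ∑ k : Fin N, ω ^ (k : ℕ) • z k.castSucc := by
        simp only [smul_sub, Finset.sum_sub_distrib, Finset.smul_sum, smul_smul, pow_succ']
    _ = _ := by
        rw [sum_pow_succ_smul_succ, sub_smul, one_smul]
        abel

theorem sum_pow_smul_sub_of_pow_eq_one {ζ ω : R} (hζω : ζ * ω = 1) (hω : ω ^ N = 1)
    (z : Fin (N + 1) → M) :
    ∑ k : Fin N, ω ^ (k : ℕ) • (z k.succ - z k.castSucc) =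
      (ζ - 1) • ∑ k : Fin N, ω ^ (k : ℕ) • z k.castSucc - ζ • (z 0 - z (Fin.last N)) := by
  calc ∑ k : Fin N, ω ^ (k : ℕ) • (z k.succ - z k.castSucc)
      = ζ • ω • ∑ k : Fin N, ω ^ (k : ℕ) • (z k.succ - z k.castSucc) := by
        rw [smul_smul, hζω, one_smul]
    _ = ζ • ((1 - ω) • ∑ k : Fin N, ω ^ (k : ℕ) • z k.castSucc + z (Fin.last N) - z 0) := by
        rw [smul_sum_pow_smul_sub, hω, one_smul]
    _ = _ := by
        rw [add_sub_assoc, smul_add, smul_smul, mul_sub, mul_one, hζω, ← neg_sub (z 0), smul_neg,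
          ← sub_eq_add_neg]

end SummationByParts

theorem exp_neg_two_pi_mul_I_div_pow (x N : ℂ) (k : ℕ) :
    cexp (-2 * π * I * x / N) ^ k = cexp (-2 * π * I * x * k / N) := by
  rw [← Complex.exp_nat_mul]
  ring_nf

theorem exp_neg_two_pi_mul_I_int_div_pow_self {N : ℕ} (hN : N ≠ 0) (n : ℤ) :
    cexp (-2 * π * I * n / N) ^ N = 1 := by
  rw [exp_neg_two_pi_mul_I_div_pow, mul_div_cancel_right₀ _ (Nat.cast_ne_zero.mpr hN),
    Complex.exp_eq_one_iff]
  exact ⟨-n, by push_cast; ring⟩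

theorem ddp_modulo_boundary_general {E : Type*} [AddCommGroup E] [Module ℂ E]
    {N : ℕ} (hN : N ≠ 0) (z w : Fin (N + 1) → E)
    (hw_zero : w 0 = z 0) (hw_last : w (Fin.last N) = z (Fin.last N)) (n : ℤ) :
    ∑ k : Fin N, cexp (-2 * π * I * n * (k : ℕ) / N) • (z k.succ - z k.castSucc) =
      (cexp (2 * π * I * n / N) - 1) •
          ∑ k : Fin N, cexp (-2 * π * I * n * (k : ℕ) / N) • z k.castSucc -
        cexp (2 * π * I * n / N) • (w 0 - w (Fin.last N)) := by
  have inverse_roots : cexp (2 * π * I * n / N) * cexp (-2 * π * I * n / N) = 1 := by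
    rw [← Complex.exp_add, ← Complex.exp_zero]
    ring_nf
  simp only [hw_zero, hw_last, ← exp_neg_two_pi_mul_I_div_pow]
  exact sum_pow_smul_sub_of_pow_eq_one inverse_roots
    (exp_neg_two_pi_mul_I_int_div_pow_self hN n) z

/-- **DDP with modulo boundary samples.**
Let `λ > 0` and `z ∈ ℝ^{N+1}` with no folding at the first and last samples,
i.e. `M_λ(z[0]) = z[0]` and `M_λ(z[N]) = z[N]`, and set `w[k] = M_λ(z[k])`.
Then for every `n = 0, …, N−1`,
`\hat{Δz}[n] = (e^{2πi n/N} − 1)·\tilde z[n] − e^{2πi n/N}·(w[0] − w[N])`. -/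
theorem ddp_modulo_boundary
    (lam : ℝ) (hlam : 0 < lam)
    (N : ℕ) (hN : 1 ≤ N) (z : Fin (N + 1) → ℝ)
    (h0 : centeredModulo lam (z 0) = z 0)
    (hNfold : centeredModulo lam (z (Fin.last N)) = z (Fin.last N))
    (w : Fin (N + 1) → ℝ) (hw : ∀ k, w k = centeredModulo lam (z k))
    (n : ℕ) (hn : n < N) :
    ∑ k : Fin N, ((z k.succ : ℂ) - (z k.castSucc : ℂ)) *
        Complex.exp (-2 * π * I * n * (k : ℕ) / N)
      = (Complex.exp (2 * π * I * n / N) - 1) *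
          (∑ k : Fin N, (z k.castSucc : ℂ) *
            Complex.exp (-2 * π * I * n * (k : ℕ) / N))
        - Complex.exp (2 * π * I * n / N) * ((w 0 : ℂ) - (w (Fin.last N) : ℂ)) := by
  simpa [mul_comm] using ddp_modulo_boundary_general (Nat.one_le_iff_ne_zero.mp hN)
    (fun k ↦ (z k : ℂ)) (fun k ↦ (w k : ℂ)) (by rw [hw, h0]) (by rw [hw, hNfold]) n
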